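/- Let A' be an essential line arrangement of d' lines in P^2, let p be an intersection point of A' of maximal multiplicity m' = m(A'), and let L be a line not in A' which passes through p and contains no intersection point of A' other than p (a generic line through p). Set A = A' ∪ {L}, r' = r(A'). Then: (1) τ(A) = τ(A') + d' + m' − 1; (2) if r' < d' − m', then r(A) = r' + 1; (3) if r' = d' − m', then r(A) = r'. -/

import Mathlib

open Classical MvPolynomial

variable {K : Type*} [Field K] [CharZero K] {ℓ : ℕ}

/-- A (central) hyperplane arrangement: a finite set of nonzero linear forms,
pairwise non-proportional. -/
def IsArrangement (A : Finset (MvPolynomial (Fin ℓ) K)) : Prop :=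
  (∀ α ∈ A, α ≠ 0 ∧ α.IsHomogeneous 1) ∧
    ∀ α ∈ A, ∀ β ∈ A, α ≠ β → ∀ c : K, α ≠ c • β

/-- The arrangement is essential: the common zero set of its forms is `{0}`. -/
def IsEssential (A : Finset (MvPolynomial (Fin ℓ) K)) : Prop :=
  ∀ v : Fin ℓ → K, (∀ α ∈ A, eval v α = 0) → v = 0

/-- The defining polynomial `Q(A)`. -/
noncomputable def Qpoly (A : Finset (MvPolynomial (Fin ℓ) K)) : MvPolynomial (Fin ℓ) K :=
  ∏ α ∈ A, α

/-- Apply a derivation `θ = Σ θ_j ∂_j` to a polynomial. -/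
noncomputable def applyDer (θ : Fin ℓ → MvPolynomial (Fin ℓ) K)
    (f : MvPolynomial (Fin ℓ) K) : MvPolynomial (Fin ℓ) K :=
  ∑ j, θ j * pderiv j f

/-- The minimal degree of a Jacobian relation `r(A)`. -/
noncomputable def mdr (A : Finset (MvPolynomial (Fin ℓ) K)) : ℕ :=
  sInf {r | ∃ θ : Fin ℓ → MvPolynomial (Fin ℓ) K, θ ≠ 0 ∧
    (∀ j, (θ j).IsHomogeneous r) ∧ applyDer θ (Qpoly A) = 0}

/-- The number of elements `|A^H|` of the restriction of `A` to `H`: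
the number of distinct subspaces `H ∩ ker α_L`, `L ∈ A \ {H}`. -/
noncomputable def restCard (A : Finset (MvPolynomial (Fin ℓ) K))
    (H : MvPolynomial (Fin ℓ) K) : ℕ :=
  ((A.erase H).image fun L => {v : Fin ℓ → K | eval v H = 0 ∧ eval v L = 0}).card

/-- The number `n_j(A)` of intersection points of multiplicity `j` of a line
arrangement `A` in `P^2`. An intersection point is encoded (bijectively) by the set
of lines of `A` passing through it, which has at least two elements. -/
noncomputable def nPoints (A : Finset (MvPolynomial (Fin 3) K)) (j : ℕ) : ℕ :=
  Set.ncard {T : Finset (MvPolynomial (Fin 3) K) |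
    ∃ v : Fin 3 → K, v ≠ 0 ∧ T = A.filter (fun α => eval v α = 0) ∧
      2 ≤ T.card ∧ T.card = j}

/-- The maximal multiplicity `m(A)` of an intersection point of `A`. -/
noncomputable def maxMult (A : Finset (MvPolynomial (Fin 3) K)) : ℕ :=
  sSup {j | 2 ≤ j ∧ nPoints A j ≠ 0}

/-- The global Tjurina number `τ(A) = Σ_{j ≥ 2} n_j(A)·(j−1)²` of a line arrangement. -/
noncomputable def tjurina (A : Finset (MvPolynomial (Fin 3) K)) : ℕ :=
  ∑ j ∈ Finset.range (A.card + 1), nPoints A j * (j - 1) ^ 2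

/-- `τ(d,r)_max = (d−1)(d−r−1) + r² − C(2r−d+2, 2)`, for `d/2 ≤ r ≤ d−1`. -/
def tauMax (d r : ℕ) : ℕ :=
  (d - 1) * (d - r - 1) + r ^ 2 - Nat.choose (2 * r - d + 2) 2

/-- A line arrangement `A` is maximal Tjurina of type `(d, r)` if it consists of `d`
lines, `r(A) = r` and `τ(A) = τ(d,r)_max`. -/
def IsMaxTjurina (A : Finset (MvPolynomial (Fin 3) K)) (d r : ℕ) : Prop :=
  A.card = d ∧ mdr A = r ∧ tjurina A = tauMax d r

/-!
The Jacobian relations of `A` are, up to multiples of the Euler derivation `E = ∑ j, X_j ∂_j`, its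
logarithmic derivations, so `r(A)` is the least degree of a logarithmic derivation of `A` which is
not a multiple of `E`. Multiplication by `L` turns such a derivation of `A'` into one of
`A' ∪ {L}`, and differentiation in the direction of `p`, multiplied by the `d' - m'` lines of
`A'` not through `p`, is logarithmic for `A' ∪ {L}` as well. Hence `r(A) ≤ min (r' + 1, d' - m')`.

Conversely, let `θ` be logarithmic for `A' ∪ {L}`. At a point where two lines of the arrangement
meet, `θ` is proportional to `E`, so the `2 × 2` minors of `(θ, E)` vanish there. Genericity gives
`d' - m' + 1` such points on `L`; if `deg θ < d' - m'`, the minors, of degree `deg θ + 1`, therefore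
vanish on all of `L`. Then `θ = L φ + g E`, and `φ` is logarithmic for `A'` of degree `deg θ - 1`.

For the Tjurina number, adding `L` raises the multiplicity of `p` from `m'` to `m' + 1` and creates
`d' - m'` double points.
-/

section HomogeneousPolynomials

variable {R σ : Type*} [CommRing R] {p q : MvPolynomial σ R} {m n k : ℕ}

theorem homogeneousComponent_add_mul (hp : p.IsHomogeneous m) (k : ℕ) (q : MvPolynomial σ R) :
    homogeneousComponent (m + k) (p * q) = p * homogeneousComponent k q := by
  let := gradedAlgebra (σ := σ) (R := R)
  have h := DirectSum.coe_decompose_mul_add_of_left_mem (homogeneousSubmodule σ R) (j := k)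
    (b := q) ((mem_homogeneousSubmodule m p).2 hp)
  simpa only [DirectSum.decompose, Equiv.coe_fn_mk, DirectSum.Decomposition.decompose',
    decomposition.decompose'_apply] using h

theorem eq_C_of_isHomogeneous_zero (hp : p.IsHomogeneous 0) : p = C (coeff 0 p) :=
  totalDegree_eq_zero_iff_eq_C.1 ((totalDegree_zero_iff_isHomogeneous σ).2 hp)

theorem isHomogeneous_of_mul_left [IsDomain R] (hp : p.IsHomogeneous m) (hp₀ : p ≠ 0)
    (hpq : (p * q).IsHomogeneous (m + k)) : q.IsHomogeneous k := by
  have hcomp : p * homogeneousComponent k q = p * q := by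
    rw [← homogeneousComponent_add_mul hp, homogeneousComponent_eq_self hpq]
  rw [← mul_left_cancel₀ hp₀ hcomp]
  exact homogeneousComponent_isHomogeneous k q

theorem le_of_isHomogeneous_mul [IsDomain R] (hp : p.IsHomogeneous m)
    (hpq : (p * q).IsHomogeneous n) (hpq₀ : p * q ≠ 0) : m ≤ n := by
  have hp₀ := left_ne_zero_of_mul hpq₀
  rw [← hp.totalDegree hp₀, ← hpq.totalDegree hpq₀,
    totalDegree_mul_of_isDomain hp₀ (right_ne_zero_of_mul hpq₀)]
  exact Nat.le_add_right _ _

theorem coeff_prod_sum_of_natDegree_le {ι : Type*} (s : Finset ι) (f : ι → Polynomial R)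
    (e : ι → ℕ) (hf : ∀ i ∈ s, (f i).natDegree ≤ e i) :
    (∏ i ∈ s, f i).coeff (∑ i ∈ s, e i) = ∏ i ∈ s, (f i).coeff (e i) := by
  induction s using Finset.induction_on with
  | empty => simp
  | insert a s ha ih =>
    rw [Finset.forall_mem_insert] at hf
    have hprod := (Polynomial.natDegree_prod_le s f).trans (Finset.sum_le_sum hf.2)
    rw [Finset.prod_insert ha, Finset.sum_insert ha, Finset.prod_insert ha, ← ih hf.2,
      Polynomial.coeff_mul_add_eq_of_natDegree_le hf.1 hprod]

/-- The restriction `P (x + T v)` of a polynomial `P` to the parametrized affine line through `x`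
in direction `v`, as a polynomial in the parameter `T`. -/
noncomputable def restrictLine (x v : σ → R) (P : MvPolynomial σ R) : Polynomial R :=
  aeval (fun i => Polynomial.C (v i) * Polynomial.X + Polynomial.C (x i)) P

theorem eval_restrictLine (x v : σ → R) (P : MvPolynomial σ R) (t : R) :
    (restrictLine x v P).eval t = eval (x + t • v) P := by
  rw [restrictLine, ← Polynomial.coe_aeval_eq_eval, ← AlgHom.comp_apply, comp_aeval]
  simp only [map_add, map_mul, Polynomial.aeval_X, Polynomial.aeval_C, Algebra.algebraMap_self,
    RingHom.id_apply, aeval_eq_eval]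
  congr 2
  ext i
  simp [mul_comm t, add_comm (x i)]

theorem natDegree_restrictLine_le (x v : σ → R) (hp : p.IsHomogeneous n) :
    (restrictLine x v p).natDegree ≤ n := by
  simpa only [mul_one] using! aeval_natDegree_le p hp.totalDegree_le _ fun i =>
    Polynomial.natDegree_linear_le (a := v i) (b := x i)

theorem coeff_restrictLine (x v : σ → R) (hp : p.IsHomogeneous n) :
    (restrictLine x v p).coeff n = eval v p := by
  rw [restrictLine, aeval_def, eval₂_eq, Polynomial.finsetSum_coeff, eval_eq]
  refine Finset.sum_congr rfl fun d hd => ?_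
  rw [hp.degree_eq_sum_deg_support hd, Polynomial.algebraMap_eq, Polynomial.coeff_C_mul]
  have hlin : ∀ i, (Polynomial.C (v i) * Polynomial.X + Polynomial.C (x i)).natDegree ≤ 1 :=
    fun _ => Polynomial.natDegree_linear_le
  rw [coeff_prod_sum_of_natDegree_le _ _ _ fun i _ => by
    simpa using Polynomial.natDegree_pow_le_of_le (d i) (hlin i)]
  congr 1
  refine Finset.prod_congr rfl fun i _ => ?_
  simpa using Polynomial.coeff_pow_of_natDegree_le (m := d i) (hlin i)

theorem eval_eq_zero_of_forall_eval_add_smul_eq_zero [IsDomain R] {ι : Type*} {x v : σ → R}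
    {s : Finset ι} {t : ι → R} (hp : p.IsHomogeneous n) (hn : n ≤ s.card) (ht : Set.InjOn t s)
    (hv : eval v p = 0) (hx : ∀ i ∈ s, eval (x + t i • v) p = 0) : eval x p = 0 := by
  have hdeg : (restrictLine x v p).degree < s.card := by
    refine ((Polynomial.degree_lt_iff_coeff_zero _ _).2 fun k hk => ?_).trans_le (Nat.cast_le.2 hn)
    obtain rfl | hlt := hk.eq_or_lt
    · rw [coeff_restrictLine x v hp, hv]
    · exact Polynomial.coeff_eq_zero_of_natDegree_lt
        ((natDegree_restrictLine_le x v hp).trans_lt hlt)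
  have hzero : restrictLine x v p = 0 :=
    Polynomial.eq_zero_of_degree_lt_of_eval_index_eq_zero (v := t) s ht hdeg fun i hi => by
      rw [eval_restrictLine, hx i hi]
  simpa [hzero] using (eval_restrictLine x v p 0).symm

end HomogeneousPolynomials

section LinearForms

variable {R σ : Type*} [CommRing R]

/-- The coefficient vector `(c_j)_j` of a linear form `∑ j, c_j X_j`. -/
noncomputable def linearCoeff (α : MvPolynomial σ R) (j : σ) : R :=
  coeff (Finsupp.single j 1) α

theorem pderiv_eq_C_linearCoeff {α : MvPolynomial σ R} (hα : α.IsHomogeneous 1) (j : σ) :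
    pderiv j α = C (linearCoeff α j) := by
  rw [eq_C_of_isHomogeneous_zero hα.pderiv, coeff_pderiv]
  simp [linearCoeff]

theorem sum_C_linearCoeff_mul_X [Fintype σ] {α : MvPolynomial σ R} (hα : α.IsHomogeneous 1) :
    ∑ j, C (linearCoeff α j) * X j = α := by
  simpa only [pderiv_eq_C_linearCoeff hα, mul_comm, one_smul] using hα.sum_X_mul_pderiv

theorem eval_eq_linearCoeff_dotProduct [Fintype σ] {α : MvPolynomial σ R}
    (hα : α.IsHomogeneous 1) (w : σ → R) : eval w α = linearCoeff α ⬝ᵥ w := by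
  conv_lhs => rw [← sum_C_linearCoeff_mul_X hα]
  simp [dotProduct]

theorem eval_add_smul {α : MvPolynomial σ R} (hα : α.IsHomogeneous 1) (x v : σ → R) (t : R) :
    eval (x + t • v) α = eval x α + t * eval v α := by
  rw [← mem_homogeneousSubmodule, homogeneousSubmodule_one_eq_span_X] at hα
  induction hα using Submodule.span_induction with
  | mem _ hX =>
    obtain ⟨i, rfl⟩ := hX
    simp
  | zero => simp
  | add α β _ _ ihα ihβ =>
    simp only [map_add, ihα, ihβ]
    ring
  | smul c α _ ih =>
    simp only [smul_eval, ih]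
    ring

theorem eval_smul_of_isHomogeneous_one {α : MvPolynomial σ R} (hα : α.IsHomogeneous 1) (c : R)
    (v : σ → R) : eval (c • v) α = c * eval v α := by
  have h₀ : eval 0 α = 0 := by
    rw [eval_zero]
    exact hα.coeff_eq_zero (by simp)
  rw [← zero_add (c • v), eval_add_smul hα, h₀, zero_add]

theorem eq_smul_of_linearCoeff_eq_smul {α β : MvPolynomial σ R} (hα : α.IsHomogeneous 1)
    (hβ : β.IsHomogeneous 1) {c : R} (h : linearCoeff α = c • linearCoeff β) : α = c • β := by
  ext d
  rw [coeff_smul]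
  by_cases hd : d.degree = 1
  · obtain ⟨j, rfl⟩ := (Finsupp.sum_eq_one_iff d).1 hd
    exact congrFun h j
  · rw [hα.coeff_eq_zero hd, hβ.coeff_eq_zero hd, smul_zero]

theorem linearCoeff_ne_zero {α : MvPolynomial σ R} (hα : α.IsHomogeneous 1) (hα₀ : α ≠ 0) :
    linearCoeff α ≠ 0 := fun h =>
  hα₀ (by simpa using eq_smul_of_linearCoeff_eq_smul hα hα (c := 0) (by simpa using h))

theorem exists_eq_smul_of_dvd [IsDomain R] {n : ℕ} {α β : MvPolynomial σ R}
    (hα : α.IsHomogeneous n) (hα₀ : α ≠ 0) (hβ : β.IsHomogeneous n) (h : α ∣ β) :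
    ∃ c : R, β = c • α := by
  obtain ⟨q, rfl⟩ := h
  have hq : q.IsHomogeneous 0 := isHomogeneous_of_mul_left hα hα₀ hβ
  exact ⟨coeff 0 q, by rw [smul_eq_C_mul, ← eq_C_of_isHomogeneous_zero hq, mul_comm]⟩

theorem dvd_sub_aeval {p : MvPolynomial σ R} {f : σ → MvPolynomial σ R}
    (hf : ∀ i, p ∣ X i - f i) (P : MvPolynomial σ R) : p ∣ P - aeval f P := by
  simp only [← Ideal.mem_span_singleton, ← Ideal.Quotient.eq] at hf ⊢
  have hcomp : (Ideal.Quotient.mkₐ R (Ideal.span {p})).comp (aeval f) =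
      Ideal.Quotient.mkₐ R (Ideal.span {p}) :=
    algHom_ext fun i => by simp [hf i]
  exact (DFunLike.congr_fun hcomp P).symm

variable {F : Type*} [Field F]

theorem prime_of_isHomogeneous_one {α : MvPolynomial σ F} (hα : α.IsHomogeneous 1)
    (hα₀ : α ≠ 0) : Prime α := by
  refine (irreducible_of_totalDegree_eq_one (hα.totalDegree hα₀) fun c hc => ?_).prime
  obtain ⟨d, hd⟩ := ne_zero_iff.1 hα₀
  exact (ne_zero_of_dvd_ne_zero hd (hc d)).isUnit

theorem exists_eval_eq_one [Infinite F] {α : MvPolynomial σ F} (hα : α.IsHomogeneous 1)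
    (hα₀ : α ≠ 0) : ∃ u, eval u α = 1 := by
  obtain ⟨u, hu⟩ : ∃ u, eval u α ≠ 0 := by
    contrapose! hα₀
    exact MvPolynomial.funext fun u => by rw [hα₀, map_zero]
  exact ⟨(eval u α)⁻¹ • u, by rw [eval_smul_of_isHomogeneous_one hα, inv_mul_cancel₀ hu]⟩

theorem eval_add_neg_eval_div_eval_smul {α : MvPolynomial σ F}
    (hα : α.IsHomogeneous 1) (x : σ → F) {v : σ → F} (hv : eval v α ≠ 0) :
    eval (x + (-eval x α / eval v α) • v) α = 0 := by
  rw [eval_add_smul hα, div_mul_cancel₀ _ hv, add_neg_cancel]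

theorem dvd_of_forall_eval_eq_zero [Infinite F] {α P : MvPolynomial σ F}
    (hα : α.IsHomogeneous 1) (hα₀ : α ≠ 0) (hP : ∀ w, eval w α = 0 → eval w P = 0) : α ∣ P := by
  obtain ⟨u, hu⟩ := exists_eval_eq_one hα hα₀
  -- The substitution `X ↦ X - α u` is the projection onto the hyperplane `α = 0` along `u`.
  have hdvd : α ∣ P - aeval (fun i => X i - α * C (u i)) P := dvd_sub_aeval (fun i => by simp) P
  have hproj : aeval (fun i => X i - α * C (u i)) P = 0 := by
    refine MvPolynomial.funext fun w => ?_
    have hw : eval (w + -eval w α • u) P = 0 :=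
      hP _ (by rw [eval_add_smul hα, hu, mul_one, add_neg_cancel])
    rw [map_zero, ← hw, ← aeval_eq_eval, ← aeval_eq_eval, ← AlgHom.comp_apply, comp_aeval]
    congr 2
    ext i
    simp [sub_eq_add_neg]
  rwa [hproj, sub_zero] at hdvd

end LinearForms

namespace IsArrangement

variable {F : Type*} [Field F] {A B : Finset (MvPolynomial (Fin ℓ) F)}

theorem subset (hA : IsArrangement A) (hBA : B ⊆ A) : IsArrangement B :=
  ⟨fun α hα => hA.1 α (hBA hα), fun α hα β hβ => hA.2 α (hBA hα) β (hBA hβ)⟩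

theorem prime (hA : IsArrangement A) {α : MvPolynomial (Fin ℓ) F} (hα : α ∈ A) : Prime α :=
  prime_of_isHomogeneous_one (hA.1 α hα).2 (hA.1 α hα).1

theorem not_dvd (hA : IsArrangement A) {α β : MvPolynomial (Fin ℓ) F} (hα : α ∈ A) (hβ : β ∈ A)
    (hne : α ≠ β) : ¬α ∣ β := fun hdvd =>
  let ⟨c, hc⟩ := exists_eq_smul_of_dvd (hA.1 α hα).2 (hA.1 α hα).1 (hA.1 β hβ).2 hdvd
  hA.2 β hβ α hα hne.symm c hc

theorem isHomogeneous_Qpoly (hA : IsArrangement A) : (Qpoly A).IsHomogeneous A.card := by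
  simpa [Qpoly] using IsHomogeneous.prod A id (fun _ => 1) fun α hα => (hA.1 α hα).2

theorem Qpoly_ne_zero (hA : IsArrangement A) : Qpoly A ≠ 0 :=
  Finset.prod_ne_zero_iff.2 fun α hα => (hA.1 α hα).1

end IsArrangement

section Derivations

variable {F : Type*} [Field F] {θ : Fin ℓ → MvPolynomial (Fin ℓ) F}
  {f g : MvPolynomial (Fin ℓ) F} {n r : ℕ}

theorem applyDer_mul (θ : Fin ℓ → MvPolynomial (Fin ℓ) F) (f g : MvPolynomial (Fin ℓ) F) :
    applyDer θ (f * g) = f * applyDer θ g + g * applyDer θ f := by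
  simp only [applyDer, Derivation.leibniz, smul_eq_mul, Finset.mul_sum, ← Finset.sum_add_distrib]
  exact Finset.sum_congr rfl fun j _ => by ring

theorem applyDer_add (θ φ : Fin ℓ → MvPolynomial (Fin ℓ) F) (f : MvPolynomial (Fin ℓ) F) :
    applyDer (θ + φ) f = applyDer θ f + applyDer φ f := by
  simp only [applyDer, Pi.add_apply, add_mul, Finset.sum_add_distrib]

theorem applyDer_smul (g : MvPolynomial (Fin ℓ) F) (θ : Fin ℓ → MvPolynomial (Fin ℓ) F)
    (f : MvPolynomial (Fin ℓ) F) : applyDer (g • θ) f = g * applyDer θ f := by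
  simp only [applyDer, Pi.smul_apply, smul_eq_mul, mul_assoc, Finset.mul_sum]

theorem applyDer_X (hf : f.IsHomogeneous n) : applyDer X f = n • f :=
  hf.sum_X_mul_pderiv

theorem isHomogeneous_applyDer (hθ : ∀ j, (θ j).IsHomogeneous r) (hf : f.IsHomogeneous n) :
    (applyDer θ f).IsHomogeneous (r + (n - 1)) :=
  IsHomogeneous.sum _ _ _ fun j _ => (hθ j).mul hf.pderiv

theorem eval_applyDer {α : MvPolynomial (Fin ℓ) F} (hα : α.IsHomogeneous 1)
    (θ : Fin ℓ → MvPolynomial (Fin ℓ) F) (w : Fin ℓ → F) :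
    eval w (applyDer θ α) = eval (fun j => eval w (θ j)) α := by
  simp [applyDer, pderiv_eq_C_linearCoeff hα, eval_eq_linearCoeff_dotProduct hα, dotProduct,
    mul_comm]

theorem applyDer_C {α : MvPolynomial (Fin ℓ) F} (hα : α.IsHomogeneous 1) (v : Fin ℓ → F) :
    applyDer (fun j => C (v j)) α = C (eval v α) := by
  simp [applyDer, pderiv_eq_C_linearCoeff hα, eval_eq_linearCoeff_dotProduct hα, dotProduct,
    mul_comm]

theorem applyDer_mul_X_sub (hf : f.IsHomogeneous n) (θ : Fin ℓ → MvPolynomial (Fin ℓ) F)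
    (k : Fin ℓ) :
    applyDer θ f * X k - θ k * n • f = ∑ j, (θ j * X k - θ k * X j) * pderiv j f := by
  rw [← hf.sum_X_mul_pderiv, applyDer, Finset.sum_mul, Finset.mul_sum, ← Finset.sum_sub_distrib]
  exact Finset.sum_congr rfl fun j _ => by ring

/-- A derivation `θ = ∑ j, θ_j ∂_j` is radial if it is proportional to the Euler derivation
`∑ j, X_j ∂_j`; proportionality is expressed by the vanishing of the `2 × 2` minors. -/
def IsRadial (θ : Fin ℓ → MvPolynomial (Fin ℓ) F) : Prop :=
  ∀ i j, θ i * X j = θ j * X i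

theorem isRadial_add_smul_X : IsRadial (θ + g • X) ↔ IsRadial θ := by
  refine forall₂_congr fun i j => ?_
  simp only [Pi.add_apply, Pi.smul_apply, smul_eq_mul]
  rw [← sub_eq_zero, ← sub_eq_zero (a := θ i * X j)]
  ring_nf

theorem isRadial_smul (hg : g ≠ 0) : IsRadial (g • θ) ↔ IsRadial θ := by
  simp only [IsRadial, Pi.smul_apply, smul_eq_mul, mul_assoc, mul_right_inj' hg]

theorem not_isRadial_C [Nontrivial (Fin ℓ)] {v : Fin ℓ → F} (hv : v ≠ 0) :
    ¬IsRadial fun j => C (v j) := by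
  intro h
  obtain ⟨j, hj⟩ := Function.ne_iff.1 hv
  obtain ⟨i, hij⟩ := exists_ne j
  exact hj (by simpa [hij] using congrArg (eval (Pi.single i (1 : F))) (h j i))

theorem IsRadial.eq_zero_of_applyDer_eq_zero [CharZero F] (hθ : IsRadial θ) (hf : f.IsHomogeneous n)
    (hf₀ : f ≠ 0) (hn : n ≠ 0) (h : applyDer θ f = 0) : θ = 0 := by
  funext k
  have hkey := applyDer_mul_X_sub hf θ k
  simpa [h, hθ _ k, hn, hf₀] using hkey

end Derivations

section LogarithmicDerivations

variable {F : Type*} [Field F] {A : Finset (MvPolynomial (Fin ℓ) F)}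
  {θ : Fin ℓ → MvPolynomial (Fin ℓ) F} {L : MvPolynomial (Fin ℓ) F} {r : ℕ}

/-- `θ` is a logarithmic derivation of `A`: as a vector field, it is tangent to every hyperplane
of `A`. -/
def IsLogDerivation (A : Finset (MvPolynomial (Fin ℓ) F))
    (θ : Fin ℓ → MvPolynomial (Fin ℓ) F) : Prop :=
  ∀ α ∈ A, α ∣ applyDer θ α

theorem isLogDerivation_iff_Qpoly_dvd (hA : IsArrangement A) :
    IsLogDerivation A θ ↔ Qpoly A ∣ applyDer θ (Qpoly A) := by
  constructor
  · intro hθ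
    induction A using Finset.induction_on with
    | empty => simp [Qpoly]
    | insert α A hα ih =>
      have hQ := ih (hA.subset (Finset.subset_insert α A)) fun β hβ =>
        hθ β (Finset.mem_insert_of_mem hβ)
      rw [Qpoly, Finset.prod_insert hα, ← Qpoly, applyDer_mul, mul_comm α]
      refine dvd_add ?_ (mul_dvd_mul_left _ (hθ α (Finset.mem_insert_self α A)))
      rw [mul_comm]
      exact mul_dvd_mul_left α hQ
  · intro hQ α hα
    have hsplit : Qpoly A = α * Qpoly (A.erase α) := (Finset.mul_prod_erase A id hα).symm
    have hdvd : α ∣ Qpoly (A.erase α) * applyDer θ α := by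
      rw [hsplit, applyDer_mul] at hQ
      exact (dvd_add_right (dvd_mul_right α _)).1 ((dvd_mul_right α _).trans hQ)
    refine ((hA.prime hα).dvd_or_dvd hdvd).resolve_left fun h => ?_
    obtain ⟨β, hβ, hαβ⟩ := (hA.prime hα).exists_mem_finset_dvd h
    exact hA.not_dvd hα (Finset.mem_of_mem_erase hβ) (Finset.ne_of_mem_erase hβ).symm hαβ

/-- `A` has a homogeneous logarithmic derivation of degree `r` that is not radial. For `A`
nonempty, these degrees are those of the nontrivial Jacobian relations of `A`. -/
def HasNonradialLogDer (A : Finset (MvPolynomial (Fin ℓ) F)) (r : ℕ) : Prop :=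
  ∃ θ : Fin ℓ → MvPolynomial (Fin ℓ) F,
    ¬IsRadial θ ∧ (∀ j, (θ j).IsHomogeneous r) ∧ IsLogDerivation A θ

theorem hasNonradialLogDer_of_applyDer_eq_zero [CharZero F] (hA : IsArrangement A)
    (hne : A.Nonempty) (hθ₀ : θ ≠ 0) (hθ : ∀ j, (θ j).IsHomogeneous r)
    (hQ : applyDer θ (Qpoly A) = 0) : HasNonradialLogDer A r :=
  ⟨θ, fun hrad => hθ₀ (hrad.eq_zero_of_applyDer_eq_zero hA.isHomogeneous_Qpoly hA.Qpoly_ne_zero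
    hne.card_ne_zero hQ), hθ, (isLogDerivation_iff_Qpoly_dvd hA).2 (hQ ▸ dvd_zero _)⟩

theorem HasNonradialLogDer.exists_applyDer_eq_zero [CharZero F] (hA : IsArrangement A)
    (hne : A.Nonempty) (h : HasNonradialLogDer A r) :
    ∃ θ : Fin ℓ → MvPolynomial (Fin ℓ) F,
      θ ≠ 0 ∧ (∀ j, (θ j).IsHomogeneous r) ∧ applyDer θ (Qpoly A) = 0 := by
  obtain ⟨θ, hrad, hθ, hlog⟩ := h
  obtain ⟨g, hg⟩ := (isLogDerivation_iff_Qpoly_dvd hA).1 hlog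
  have hgX (j : Fin ℓ) : (g * X j).IsHomogeneous r := by
    have hQgX : (Qpoly A * (g * X j)).IsHomogeneous (A.card + r) := by
      have hQX := (isHomogeneous_applyDer hθ hA.isHomogeneous_Qpoly).mul (isHomogeneous_X F j)
      rw [hg, mul_assoc] at hQX
      convert hQX using 1
      have := hne.card_pos
      omega
    exact isHomogeneous_of_mul_left hA.isHomogeneous_Qpoly hA.Qpoly_ne_zero hQgX
  -- The Euler derivation `E` has `E Q = #A • Q`, so subtracting `(g / #A) • E` from `θ` kills `Q`.
  set c : F := -(A.card : F)⁻¹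
  refine ⟨θ + (C c * g) • X, fun h₀ => hrad ?_, fun j => (hθ j).add ?_, ?_⟩
  · rw [← isRadial_add_smul_X (g := C c * g), h₀]
    exact fun _ _ => by simp
  · simpa only [Pi.smul_apply, smul_eq_mul, mul_assoc] using (hgX j).C_mul c
  · have hc : C c * (A.card : MvPolynomial (Fin ℓ) F) = -1 := by
      have : (A.card : F) ≠ 0 := Nat.cast_ne_zero.2 hne.card_ne_zero
      rw [← map_natCast C, ← C_mul, neg_mul, inv_mul_cancel₀ this, C_neg, C_1]
    rw [applyDer_add, applyDer_smul, applyDer_X hA.isHomogeneous_Qpoly, hg, nsmul_eq_mul]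
    linear_combination Qpoly A * g * hc

theorem hasNonradialLogDer_card_filter [Nontrivial (Fin ℓ)] (hA : IsArrangement A)
    {v : Fin ℓ → F} (hv : v ≠ 0) :
    HasNonradialLogDer A (A.filter fun α => eval v α ≠ 0).card := by
  set B := A.filter fun α => eval v α ≠ 0
  have hB : IsArrangement B := hA.subset (Finset.filter_subset _ A)
  refine ⟨Qpoly B • fun j => C (v j), (isRadial_smul hB.Qpoly_ne_zero).not.2 (not_isRadial_C hv),
    fun j => ?_, fun α hα => ?_⟩
  · simpa only [Pi.smul_apply, smul_eq_mul, mul_comm] using hB.isHomogeneous_Qpoly.C_mul (v j)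
  · rw [applyDer_smul, applyDer_C (hA.1 α hα).2]
    by_cases hαv : eval v α = 0
    · simp [hαv]
    · have hα : α ∈ B := Finset.mem_filter.2 ⟨hα, hαv⟩
      exact (Finset.dvd_prod_of_mem id hα).mul_right _

theorem HasNonradialLogDer.insert (hL : L.IsHomogeneous 1) (hL₀ : L ≠ 0)
    (h : HasNonradialLogDer A r) : HasNonradialLogDer (insert L A) (r + 1) := by
  obtain ⟨θ, hrad, hθ, hlog⟩ := h
  refine ⟨L • θ, (isRadial_smul hL₀).not.2 hrad, fun j => ?_, ?_⟩
  · simpa only [Pi.smul_apply, smul_eq_mul, mul_comm] using (hθ j).mul hL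
  · simp only [IsLogDerivation, applyDer_smul, Finset.forall_mem_insert]
    exact ⟨dvd_mul_right _ _, fun α hα => (hlog α hα).mul_left L⟩

theorem isLeast_mdr [CharZero F] [Nontrivial (Fin ℓ)] (hA : IsArrangement A)
    (hne : A.Nonempty) : IsLeast {r | HasNonradialLogDer A r} (mdr A) := by
  have hmdr : mdr A = sInf {r | HasNonradialLogDer A r} := by
    rw [mdr]
    congr! 3 with r
    exact ⟨fun ⟨θ, hθ₀, hθ, hQ⟩ => hasNonradialLogDer_of_applyDer_eq_zero hA hne hθ₀ hθ hQ,
      fun h => h.exists_applyDer_eq_zero hA hne⟩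
  obtain ⟨v, hv⟩ := exists_ne (0 : Fin ℓ → F)
  rw [hmdr]
  exact ⟨Nat.sInf_mem ⟨_, hasNonradialLogDer_card_filter hA hv⟩, fun r hr => Nat.sInf_le hr⟩

theorem exists_eq_smul_add_smul_X {α : MvPolynomial (Fin ℓ) F} (hL : Prime L) (hLα : ¬L ∣ α)
    (hα : α.IsHomogeneous 1) (hθα : α ∣ applyDer θ α)
    (hdvd : ∀ i j, L ∣ θ i * X j - θ j * X i) :
    ∃ g φ, applyDer θ α = α * g ∧ θ = L • φ + g • X := by
  obtain ⟨g, hg⟩ := hθα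
  have hdvd_sub (k : Fin ℓ) : L ∣ θ k - g * X k := by
    have hprod : L ∣ α * (g * X k - θ k) := by
      have hkey := applyDer_mul_X_sub hα θ k
      rw [hg, one_smul] at hkey
      rw [mul_sub, ← mul_assoc, mul_comm α (θ k), hkey]
      exact Finset.dvd_sum fun j _ => (hdvd j k).mul_right _
    exact (dvd_sub_comm).1 ((hL.dvd_or_dvd hprod).resolve_left hLα)
  choose φ hφ using hdvd_sub
  exact ⟨g, φ, hg, funext fun k => sub_eq_iff_eq_add.1 (hφ k)⟩

theorem isLogDerivation_of_smul_add_smul_X (hA : IsArrangement (insert L A)) (hLA : L ∉ A)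
    {φ : Fin ℓ → MvPolynomial (Fin ℓ) F} {g : MvPolynomial (Fin ℓ) F}
    (h : IsLogDerivation (insert L A) (L • φ + g • X)) : IsLogDerivation A φ := by
  intro α hα
  have hαmem := Finset.mem_insert_of_mem (b := L) hα
  have hdvd : α ∣ L * applyDer φ α := by
    have hsum := h α hαmem
    rw [applyDer_add, applyDer_smul, applyDer_smul, applyDer_X (hA.1 α hαmem).2, one_smul] at hsum
    exact (dvd_add_left (dvd_mul_left α g)).1 hsum
  exact ((hA.prime hαmem).dvd_or_dvd hdvd).resolve_left
    (hA.not_dvd hαmem (Finset.mem_insert_self L A) (ne_of_mem_of_not_mem hα hLA))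

theorem exists_hasNonradialLogDer_of_dvd_minor (hA : IsArrangement (insert L A)) (hLA : L ∉ A)
    (hne : A.Nonempty) (hrad : ¬IsRadial θ) (hθ : ∀ j, (θ j).IsHomogeneous r)
    (hlog : IsLogDerivation (insert L A) θ) (hdvd : ∀ i j, L ∣ θ i * X j - θ j * X i) :
    ∃ s, s + 1 = r ∧ HasNonradialLogDer A s := by
  have hLmem := Finset.mem_insert_self L A
  obtain ⟨α₀, hα₀⟩ := hne
  have hα₀mem := Finset.mem_insert_of_mem (b := L) hα₀
  obtain ⟨hα₀_ne, hα₀_hom⟩ := hA.1 α₀ hα₀mem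
  have hLα₀ : ¬L ∣ α₀ := hA.not_dvd hLmem hα₀mem (ne_of_mem_of_not_mem hα₀ hLA).symm
  obtain ⟨g, φ, hg, hθφ⟩ :=
    exists_eq_smul_add_smul_X (hA.prime hLmem) hLα₀ hα₀_hom (hlog α₀ hα₀mem) hdvd
  have hgX (k : Fin ℓ) : (g * X k).IsHomogeneous r := by
    have hmul : (α₀ * (g * X k)).IsHomogeneous (1 + r) := by
      rw [← mul_assoc, ← hg, add_comm]
      exact (isHomogeneous_applyDer hθ hα₀_hom).mul (isHomogeneous_X F k)
    exact isHomogeneous_of_mul_left hα₀_hom hα₀_ne hmul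
  have hLφ (k : Fin ℓ) : (L * φ k).IsHomogeneous r := by
    have hk : L * φ k = θ k - g * X k := eq_sub_of_add_eq (congrFun hθφ k).symm
    exact hk ▸ (hθ k).sub (hgX k)
  obtain ⟨hL₀, hL₁⟩ := hA.1 L hLmem
  have hφrad : ¬IsRadial φ := by rwa [hθφ, isRadial_add_smul_X, isRadial_smul hL₀] at hrad
  obtain ⟨k, hk⟩ : ∃ k, φ k ≠ 0 := by
    by_contra! h₀
    exact hφrad fun i j => by simp [h₀]
  obtain ⟨s, rfl⟩ := Nat.exists_eq_add_of_le
    (le_of_isHomogeneous_mul hL₁ (hLφ k) (mul_ne_zero hL₀ hk))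
  refine ⟨s, add_comm s 1, φ, hφrad, fun j => isHomogeneous_of_mul_left hL₁ hL₀ (hLφ j), ?_⟩
  exact isLogDerivation_of_smul_add_smul_X hA hLA (hθφ ▸ hlog)

end LogarithmicDerivations

section CommonZeros

variable {F : Type*} [Field F]

theorem exists_ne_zero_eval_eq_zero {σ : Type*} [Fintype σ] (hσ : 2 < Fintype.card σ)
    {α β : MvPolynomial σ F} (hα : α.IsHomogeneous 1) (hβ : β.IsHomogeneous 1) :
    ∃ w, w ≠ 0 ∧ eval w α = 0 ∧ eval w β = 0 := by
  let f : (σ → F) →ₗ[F] Fin 2 → F := (Matrix.of ![linearCoeff α, linearCoeff β]).mulVecLin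
  obtain ⟨w, hw, hw₀⟩ := Submodule.exists_mem_ne_zero_of_ne_bot
    (LinearMap.ker_ne_bot_of_finrank_lt (f := f) (by simpa using hσ))
  have hf : f w = 0 := hw
  exact ⟨w, hw₀, (eval_eq_linearCoeff_dotProduct hα w).trans (congrFun hf 0),
    (eval_eq_linearCoeff_dotProduct hβ w).trans (congrFun hf 1)⟩

theorem exists_eq_smul_of_crossProduct_eq_zero {v w : Fin 3 → F} (hv : v ≠ 0)
    (h : crossProduct v w = 0) : ∃ c : F, w = c • v := by
  by_contra! hvw
  refine crossProduct_ne_zero_iff_linearIndependent.2 ?_ h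
  exact (LinearIndependent.pair_iff' hv).2 fun c hc => hvw c hc.symm

theorem exists_eq_smul_of_eval_eq_zero {α β : MvPolynomial (Fin 3) F} (hα : α.IsHomogeneous 1)
    (hβ : β.IsHomogeneous 1) (hβ₀ : β ≠ 0) (hαβ : ∀ c : F, α ≠ c • β) {v w : Fin 3 → F}
    (hv : v ≠ 0) (hvα : eval v α = 0) (hvβ : eval v β = 0) (hwα : eval w α = 0)
    (hwβ : eval w β = 0) : ∃ c : F, w = c • v := by
  by_contra hvw
  have hn : crossProduct v w ≠ 0 := fun h => hvw (exists_eq_smul_of_crossProduct_eq_zero hv h)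
  have hnormal {γ : MvPolynomial (Fin 3) F} (hγ : γ.IsHomogeneous 1) (hvγ : eval v γ = 0)
      (hwγ : eval w γ = 0) : ∃ c : F, linearCoeff γ = c • crossProduct v w := by
    rw [eval_eq_linearCoeff_dotProduct hγ, dotProduct_comm] at hvγ hwγ
    refine exists_eq_smul_of_crossProduct_eq_zero hn ?_
    rw [cross_cross_eq_smul_sub_smul]
    simp [hvγ, hwγ]
  obtain ⟨a, ha⟩ := hnormal hα hvα hwα
  obtain ⟨b, hb⟩ := hnormal hβ hvβ hwβ
  have hb₀ : b ≠ 0 := by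
    rintro rfl
    exact linearCoeff_ne_zero hβ hβ₀ (by simpa using hb)
  refine hαβ (a / b) (eq_smul_of_linearCoeff_eq_smul hα hβ ?_)
  rw [ha, hb, smul_smul, div_mul_cancel₀ a hb₀]

theorem eval_minor_eq_zero {α β : MvPolynomial (Fin 3) F} (hα : α.IsHomogeneous 1)
    (hβ : β.IsHomogeneous 1) (hβ₀ : β ≠ 0) (hαβ : ∀ c : F, α ≠ c • β)
    {θ : Fin 3 → MvPolynomial (Fin 3) F} (hθα : α ∣ applyDer θ α) (hθβ : β ∣ applyDer θ β)
    {w : Fin 3 → F} (hwα : eval w α = 0) (hwβ : eval w β = 0) (i j : Fin 3) :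
    eval w (θ i * X j - θ j * X i) = 0 := by
  obtain rfl | hw := eq_or_ne w 0
  · simp
  have htangent {γ : MvPolynomial (Fin 3) F} (hγ : γ.IsHomogeneous 1) (hθγ : γ ∣ applyDer θ γ)
      (hwγ : eval w γ = 0) : eval (fun j => eval w (θ j)) γ = 0 := by
    obtain ⟨g, hg⟩ := hθγ
    rw [← eval_applyDer hγ, hg, map_mul, hwγ, zero_mul]
  obtain ⟨c, hc⟩ := exists_eq_smul_of_eval_eq_zero hα hβ hβ₀ hαβ hw hwα hwβ
    (htangent hα hθα hwα) (htangent hβ hθβ hwβ)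
  have hθw (k : Fin 3) : eval w (θ k) = c * w k := congrFun hc k
  simp only [map_sub, map_mul, eval_X, hθw]
  ring

end CommonZeros

section GenericLine

variable {F : Type*} [Field F] {A : Finset (MvPolynomial (Fin 3) F)} {v w : Fin 3 → F}
  {L α : MvPolynomial (Fin 3) F}

/-- The lines of `A` through the point of the projective plane represented by `w ≠ 0`. -/
noncomputable def linesThrough (A : Finset (MvPolynomial (Fin 3) F)) (w : Fin 3 → F) :
    Finset (MvPolynomial (Fin 3) F) :=
  A.filter fun α => eval w α = 0

theorem mem_linesThrough : α ∈ linesThrough A w ↔ α ∈ A ∧ eval w α = 0 :=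
  Finset.mem_filter

theorem linesThrough_smul (hA : IsArrangement A) {c : F} (hc : c ≠ 0) (w : Fin 3 → F) :
    linesThrough A (c • w) = linesThrough A w :=
  Finset.filter_congr fun α hα => by
    rw [eval_smul_of_isHomogeneous_one (hA.1 α hα).2, mul_eq_zero, or_iff_right hc]

theorem linesThrough_eq_of_mem_of_mem (hA : IsArrangement A) (hv : v ≠ 0) (hw : w ≠ 0)
    {β : MvPolynomial (Fin 3) F} (hne : α ≠ β) (hvα : α ∈ linesThrough A v)
    (hvβ : β ∈ linesThrough A v) (hwα : α ∈ linesThrough A w) (hwβ : β ∈ linesThrough A w) :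
    linesThrough A w = linesThrough A v := by
  rw [mem_linesThrough] at hvα hvβ hwα hwβ
  obtain ⟨hα, hvα⟩ := hvα
  obtain ⟨hβ, hvβ⟩ := hvβ
  obtain ⟨c, rfl⟩ := exists_eq_smul_of_eval_eq_zero (hA.1 α hα).2 (hA.1 β hβ).2 (hA.1 β hβ).1
    (hA.2 α hα β hβ hne) hv hvα hvβ hwα.2 hwβ.2
  exact linesThrough_smul hA (left_ne_zero_of_smul hw) v

theorem linesThrough_insert_of_eval_eq_zero (hL : eval w L = 0) :
    linesThrough (insert L A) w = insert L (linesThrough A w) := by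
  rw [linesThrough, Finset.filter_insert, if_pos hL, linesThrough]

theorem linesThrough_insert_of_eval_ne_zero (hL : eval w L ≠ 0) :
    linesThrough (insert L A) w = linesThrough A w := by
  rw [linesThrough, Finset.filter_insert, if_neg hL, linesThrough]

theorem card_filter_eval_ne_zero (A : Finset (MvPolynomial (Fin 3) F)) (v : Fin 3 → F) :
    (A.filter fun α => eval v α ≠ 0).card = A.card - (linesThrough A v).card := by
  rw [Finset.filter_not, Finset.card_sdiff_of_subset (Finset.filter_subset _ A)]
  rfl

/-- `L` is a new line that can be added to the arrangement `A`, passes through the point `v`, and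
meets `A` in no intersection point of `A` other than `v`. The point `v` itself need not be an
intersection point of `A`. -/
structure IsGenericLineThrough (A : Finset (MvPolynomial (Fin 3) F)) (v : Fin 3 → F)
    (L : MvPolynomial (Fin 3) F) : Prop where
  notMem : L ∉ A
  isArrangement_insert : IsArrangement (insert L A)
  eval_eq_zero : eval v L = 0
  exists_eq_smul : ∀ w : Fin 3 → F, w ≠ 0 → eval w L = 0 → 2 ≤ (linesThrough A w).card →
    ∃ c : F, w = c • v

namespace IsGenericLineThrough

theorem isArrangement (h : IsGenericLineThrough A v L) : IsArrangement A :=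
  h.isArrangement_insert.subset (Finset.subset_insert L A)

theorem isHomogeneous (h : IsGenericLineThrough A v L) : L.IsHomogeneous 1 :=
  (h.isArrangement_insert.1 L (Finset.mem_insert_self L A)).2

theorem ne_zero (h : IsGenericLineThrough A v L) : L ≠ 0 :=
  (h.isArrangement_insert.1 L (Finset.mem_insert_self L A)).1

theorem ne_smul (h : IsGenericLineThrough A v L) (hα : α ∈ A) (c : F) : α ≠ c • L :=
  h.isArrangement_insert.2 α (Finset.mem_insert_of_mem hα) L (Finset.mem_insert_self L A)
    (ne_of_mem_of_not_mem hα h.notMem) c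

theorem linesThrough_eq_singleton (h : IsGenericLineThrough A v L) (hα : α ∈ A)
    (hαv : eval v α ≠ 0) (hw : w ≠ 0) (hwα : eval w α = 0) (hwL : eval w L = 0) :
    linesThrough A w = {α} := by
  have hcard : ¬2 ≤ (linesThrough A w).card := fun hcard => by
    obtain ⟨c, rfl⟩ := h.exists_eq_smul w hw hwL hcard
    rw [eval_smul_of_isHomogeneous_one (h.isArrangement.1 α hα).2] at hwα
    exact (mul_ne_zero (left_ne_zero_of_smul hw) hαv) hwα
  have hα : α ∈ linesThrough A w := mem_linesThrough.2 ⟨hα, hwα⟩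
  exact Finset.eq_singleton_iff_unique_mem.2
    ⟨hα, fun β hβ => Finset.card_le_one.1 (by omega) β hβ α hα⟩

theorem injOn_neg_eval_div_eval (h : IsGenericLineThrough A v L) {x : Fin 3 → F}
    (hxL : eval x L = 0) (hxv : ∀ c : F, x ≠ c • v) :
    Set.InjOn (fun α => -eval x α / eval v α) (A.filter fun α => eval v α ≠ 0) := by
  intro α hα β hβ hαβ
  obtain ⟨hα, hαv⟩ := Finset.mem_filter.1 hα
  obtain ⟨hβ, hβv⟩ := Finset.mem_filter.1 hβ
  set t := -eval x α / eval v α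
  change t = -eval x β / eval v β at hαβ
  have hw : x + t • v ≠ 0 := fun h₀ => hxv (-t) (by rw [neg_smul, eq_neg_of_add_eq_zero_left h₀])
  have hwL : eval (x + t • v) L = 0 := by
    rw [eval_add_smul h.isHomogeneous, hxL, h.eval_eq_zero, mul_zero, add_zero]
  have hwα := eval_add_neg_eval_div_eval_smul (h.isArrangement.1 α hα).2 x hαv
  have hwβ := eval_add_neg_eval_div_eval_smul (h.isArrangement.1 β hβ).2 x hβv
  rw [← hαβ] at hwβ
  have hmem : β ∈ linesThrough A (x + t • v) := mem_linesThrough.2 ⟨hβ, hwβ⟩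
  rw [h.linesThrough_eq_singleton hα hαv hw hwα hwL] at hmem
  exact (Finset.mem_singleton.1 hmem).symm

theorem dvd_minor [Infinite F] (h : IsGenericLineThrough A v L) (hm : (linesThrough A v).Nonempty)
    {θ : Fin 3 → MvPolynomial (Fin 3) F} {r : ℕ} (hθ : ∀ j, (θ j).IsHomogeneous r)
    (hlog : IsLogDerivation (insert L A) θ) (hr : r < (A.filter fun α => eval v α ≠ 0).card)
    (i j : Fin 3) : L ∣ θ i * X j - θ j * X i := by
  set P := θ i * X j - θ j * X i
  have hP : P.IsHomogeneous (r + 1) :=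
    ((hθ i).mul (isHomogeneous_X F j)).sub ((hθ j).mul (isHomogeneous_X F i))
  obtain ⟨hlogL, hlogA⟩ := (Finset.forall_mem_insert ..).1 hlog
  have hlin (α) (hα : α ∈ A) : α.IsHomogeneous 1 := (h.isArrangement.1 α hα).2
  have hPw {w : Fin 3 → F} (hwL : eval w L = 0) {α : MvPolynomial (Fin 3) F} (hα : α ∈ A)
      (hwα : eval w α = 0) : eval w P = 0 :=
    eval_minor_eq_zero (hlin α hα) h.isHomogeneous h.ne_zero (h.ne_smul hα) (hlogA α hα) hlogL
      hwα hwL i j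
  obtain ⟨α₀, hα₀⟩ := hm
  obtain ⟨hα₀, hα₀v⟩ := mem_linesThrough.1 hα₀
  refine dvd_of_forall_eval_eq_zero h.isHomogeneous h.ne_zero fun x hxL => ?_
  by_cases! hxv : ∃ c : F, x = c • v
  · obtain ⟨c, rfl⟩ := hxv
    exact hPw hxL hα₀ (by rw [eval_smul_of_isHomogeneous_one (hlin α₀ hα₀), hα₀v, mul_zero])
  -- `P` vanishes at `v`, the point at infinity of the affine line `x + F v` inside `L`, and at the
  -- distinct points where the lines of `A` not through `v` cut this affine line: these are more
  -- zeros than its degree allows.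
  refine eval_eq_zero_of_forall_eval_add_smul_eq_zero hP hr (h.injOn_neg_eval_div_eval hxL hxv)
    (hPw h.eval_eq_zero hα₀ hα₀v) fun α hα => ?_
  obtain ⟨hα, hαv⟩ := Finset.mem_filter.1 hα
  refine hPw ?_ hα (eval_add_neg_eval_div_eval_smul (hlin α hα) x hαv)
  rw [eval_add_smul h.isHomogeneous, hxL, h.eval_eq_zero, mul_zero, add_zero]

theorem mdr_insert [CharZero F] (h : IsGenericLineThrough A v L) (hv : v ≠ 0)
    (hm : (linesThrough A v).Nonempty) :
    mdr (insert L A) = min (mdr A + 1) (A.card - (linesThrough A v).card) := by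
  have hleast := isLeast_mdr h.isArrangement (hm.mono (Finset.filter_subset _ A))
  have hleast_insert := isLeast_mdr h.isArrangement_insert (Finset.insert_nonempty L A)
  rw [← card_filter_eval_ne_zero]
  refine le_antisymm (le_min ?_ ?_) (min_le_iff.2 ?_)
  · exact hleast_insert.2 (hleast.1.insert h.isHomogeneous h.ne_zero)
  · have hpencil := hasNonradialLogDer_card_filter h.isArrangement_insert hv
    rw [Finset.filter_insert, if_neg (not_not.2 h.eval_eq_zero)] at hpencil
    exact hleast_insert.2 hpencil
  · refine or_iff_not_imp_right.2 fun hlt => ?_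
    obtain ⟨θ, hrad, hθ, hlog⟩ := hleast_insert.1
    obtain ⟨s, hs, hlogs⟩ := exists_hasNonradialLogDer_of_dvd_minor h.isArrangement_insert
      h.notMem (hm.mono (Finset.filter_subset _ A)) hrad hθ hlog
      (h.dvd_minor hm hθ hlog (not_le.1 hlt))
    rw [← hs]
    exact Nat.succ_le_succ (hleast.2 hlogs)

end IsGenericLineThrough

end GenericLine

section Tjurina

variable {F : Type*} [Field F] {A T : Finset (MvPolynomial (Fin 3) F)} {v : Fin 3 → F}
  {L : MvPolynomial (Fin 3) F}

/-- The intersection points of `A`, each encoded by the set of at least two lines of `A` passing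
through it. -/
noncomputable def intersectionPoints (A : Finset (MvPolynomial (Fin 3) F)) :
    Finset (Finset (MvPolynomial (Fin 3) F)) :=
  A.powerset.filter fun T => ∃ w, w ≠ 0 ∧ T = linesThrough A w ∧ 2 ≤ T.card

theorem mem_intersectionPoints :
    T ∈ intersectionPoints A ↔ ∃ w, w ≠ 0 ∧ T = linesThrough A w ∧ 2 ≤ T.card := by
  simp only [intersectionPoints, Finset.mem_filter, Finset.mem_powerset, and_iff_right_iff_imp]
  rintro ⟨w, -, rfl, -⟩
  exact Finset.filter_subset _ _

theorem nPoints_eq_card_filter (A : Finset (MvPolynomial (Fin 3) F)) (j : ℕ) :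
    nPoints A j = ((intersectionPoints A).filter fun T => T.card = j).card := by
  rw [nPoints, ← Set.ncard_coe_finset]
  congr 1
  ext T
  simp only [Set.mem_ofPred_eq, Finset.coe_filter, mem_intersectionPoints, linesThrough,
    ← and_assoc, exists_and_right]

theorem tjurina_eq_sum_intersectionPoints (A : Finset (MvPolynomial (Fin 3) F)) :
    tjurina A = ∑ T ∈ intersectionPoints A, (T.card - 1) ^ 2 := by
  have hcard : ∀ T ∈ intersectionPoints A, T.card ∈ Finset.range (A.card + 1) := fun T hT =>
    Finset.mem_range_succ_iff.2
      (Finset.card_le_card (Finset.mem_powerset.1 (Finset.mem_filter.1 hT).1))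
  rw [tjurina, ← Finset.sum_fiberwise_of_maps_to hcard]
  refine Finset.sum_congr rfl fun j _ => ?_
  rw [nPoints_eq_card_filter, ← smul_eq_mul, ← Finset.sum_const]
  exact Finset.sum_congr rfl fun T hT => by rw [(Finset.mem_filter.1 hT).2]

theorem sum_erase_intersectionPoints_add (A : Finset (MvPolynomial (Fin 3) F)) (hv : v ≠ 0) :
    ∑ T ∈ (intersectionPoints A).erase (linesThrough A v), (T.card - 1) ^ 2 +
      ((linesThrough A v).card - 1) ^ 2 = tjurina A := by
  rw [tjurina_eq_sum_intersectionPoints]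
  by_cases hmem : linesThrough A v ∈ intersectionPoints A
  · exact Finset.sum_erase_add _ _ hmem
  · have hcard : (linesThrough A v).card - 1 = 0 := by
      have hlt : ¬2 ≤ (linesThrough A v).card := fun h =>
        hmem (mem_intersectionPoints.2 ⟨v, hv, rfl, h⟩)
      omega
    rw [Finset.erase_eq_of_notMem hmem, hcard, zero_pow two_ne_zero, add_zero]

namespace IsGenericLineThrough

theorem filter_notMem_intersectionPoints_insert (h : IsGenericLineThrough A v L) (hv : v ≠ 0) :
    (intersectionPoints (insert L A)).filter (L ∉ ·) =
      (intersectionPoints A).erase (linesThrough A v) := by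
  ext T
  rw [Finset.mem_filter, Finset.mem_erase, mem_intersectionPoints, mem_intersectionPoints]
  constructor
  · rintro ⟨⟨w, hw, rfl, hcard⟩, hLT⟩
    have hwL : eval w L ≠ 0 := fun hwL =>
      hLT (mem_linesThrough.2 ⟨Finset.mem_insert_self L A, hwL⟩)
    rw [linesThrough_insert_of_eval_ne_zero hwL] at hcard ⊢
    refine ⟨fun heq => hwL ?_, w, hw, rfl, hcard⟩
    obtain ⟨α, hα, β, hβ, hne⟩ := Finset.one_lt_card.1 hcard
    have hvw : linesThrough (insert L A) w = linesThrough (insert L A) v := by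
      have hsub (u : Fin 3 → F) : linesThrough A u ⊆ linesThrough (insert L A) u :=
        Finset.filter_subset_filter _ (Finset.subset_insert L A)
      exact linesThrough_eq_of_mem_of_mem h.isArrangement_insert hv hw hne (hsub v (heq ▸ hα))
        (hsub v (heq ▸ hβ)) (hsub w hα) (hsub w hβ)
    have hLw : L ∈ linesThrough (insert L A) w :=
      hvw ▸ mem_linesThrough.2 ⟨Finset.mem_insert_self L A, h.eval_eq_zero⟩
    exact (mem_linesThrough.1 hLw).2
  · rintro ⟨hne, w, hw, rfl, hcard⟩
    have hwL : eval w L ≠ 0 := fun hwL => hne <| by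
      obtain ⟨c, rfl⟩ := h.exists_eq_smul w hw hwL hcard
      exact linesThrough_smul h.isArrangement (left_ne_zero_of_smul hw) v
    exact ⟨⟨w, hw, (linesThrough_insert_of_eval_ne_zero hwL).symm, hcard⟩,
      fun hL => h.notMem (mem_linesThrough.1 hL).1⟩

theorem filter_mem_intersectionPoints_insert (h : IsGenericLineThrough A v L) (hv : v ≠ 0)
    (hm : (linesThrough A v).Nonempty) :
    (intersectionPoints (insert L A)).filter (L ∈ ·) =
      insert (insert L (linesThrough A v))
        ((A.filter fun α => eval v α ≠ 0).image fun α => {L, α}) := by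
  ext T
  rw [Finset.mem_filter, Finset.mem_insert, Finset.mem_image, mem_intersectionPoints]
  constructor
  · rintro ⟨⟨w, hw, rfl, hcard⟩, hLT⟩
    have hwL := (mem_linesThrough.1 hLT).2
    obtain ⟨α, hαw, hαL⟩ := Finset.exists_mem_ne hcard L
    obtain ⟨hα, hwα⟩ := mem_linesThrough.1 hαw
    have hα := Finset.mem_of_mem_insert_of_ne hα hαL
    by_cases hvα : eval v α = 0
    · left
      rw [← linesThrough_insert_of_eval_eq_zero h.eval_eq_zero]
      exact linesThrough_eq_of_mem_of_mem h.isArrangement_insert hv hw hαL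
        (mem_linesThrough.2 ⟨Finset.mem_insert_of_mem hα, hvα⟩)
        (mem_linesThrough.2 ⟨Finset.mem_insert_self L A, h.eval_eq_zero⟩) hαw hLT
    · exact Or.inr ⟨α, Finset.mem_filter.2 ⟨hα, hvα⟩, by
        rw [linesThrough_insert_of_eval_eq_zero hwL,
          h.linesThrough_eq_singleton hα hvα hw hwα hwL]⟩
  · rintro (rfl | ⟨α, hα, rfl⟩)
    · refine ⟨⟨v, hv, (linesThrough_insert_of_eval_eq_zero h.eval_eq_zero).symm, ?_⟩,
        Finset.mem_insert_self ..⟩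
      rw [Finset.card_insert_of_notMem fun hL => h.notMem (mem_linesThrough.1 hL).1]
      exact Nat.succ_le_succ hm.card_pos
    · obtain ⟨hα, hvα⟩ := Finset.mem_filter.1 hα
      obtain ⟨w, hw, hwL, hwα⟩ := exists_ne_zero_eval_eq_zero (by simp) h.isHomogeneous
        (h.isArrangement.1 α hα).2
      refine ⟨⟨w, hw, ?_, (Finset.card_pair (ne_of_mem_of_not_mem hα h.notMem).symm).ge⟩,
        Finset.mem_insert_self ..⟩
      rw [linesThrough_insert_of_eval_eq_zero hwL,
        h.linesThrough_eq_singleton hα hvα hw hwα hwL]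

theorem sum_filter_mem_intersectionPoints_insert (h : IsGenericLineThrough A v L) (hv : v ≠ 0)
    (hm : (linesThrough A v).Nonempty) :
    ∑ T ∈ (intersectionPoints (insert L A)).filter (L ∈ ·), (T.card - 1) ^ 2 =
      (linesThrough A v).card ^ 2 + (A.card - (linesThrough A v).card) := by
  have hLA {α : MvPolynomial (Fin 3) F} (hα : α ∈ A) : α ≠ L := ne_of_mem_of_not_mem hα h.notMem
  have hnew : insert L (linesThrough A v) ∉
      (A.filter fun α => eval v α ≠ 0).image fun α => {L, α} := by
    rw [Finset.mem_image]
    rintro ⟨α, hα, heq⟩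
    obtain ⟨hα, hvα⟩ := Finset.mem_filter.1 hα
    have hαmem : α ∈ insert L (linesThrough A v) := heq ▸ Finset.mem_insert_of_mem (by simp)
    exact hvα (mem_linesThrough.1 (Finset.mem_of_mem_insert_of_ne hαmem (hLA hα))).2
  have hinj : Set.InjOn (fun α : MvPolynomial (Fin 3) F => ({L, α} : Finset _))
      (A.filter fun α => eval v α ≠ 0) := by
    intro α hα β _ (heq : ({L, α} : Finset _) = {L, β})
    have hαmem : α ∈ ({L, β} : Finset _) := heq ▸ Finset.mem_insert_of_mem (by simp)
    exact Finset.mem_singleton.1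
      (Finset.mem_of_mem_insert_of_ne hαmem (hLA (Finset.mem_filter.1 hα).1))
  have hpair : ∀ α ∈ A.filter fun α => eval v α ≠ 0, (({L, α} : Finset _).card - 1) ^ 2 = 1 :=
    fun α hα => by
      rw [Finset.card_pair (hLA (Finset.mem_filter.1 hα).1).symm, Nat.add_one_sub_one, one_pow]
  rw [h.filter_mem_intersectionPoints_insert hv hm, Finset.sum_insert hnew, Finset.sum_image hinj,
    Finset.sum_congr rfl hpair, Finset.sum_const, smul_eq_mul, mul_one, card_filter_eval_ne_zero,
    Finset.card_insert_of_notMem fun hL => h.notMem (mem_linesThrough.1 hL).1, Nat.add_sub_cancel]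

theorem tjurina_insert (h : IsGenericLineThrough A v L) (hv : v ≠ 0)
    (hm : (linesThrough A v).Nonempty) :
    tjurina (insert L A) = tjurina A + A.card + (linesThrough A v).card - 1 := by
  have hle : (linesThrough A v).card ≤ A.card := Finset.card_le_card (Finset.filter_subset _ A)
  rw [tjurina_eq_sum_intersectionPoints, ← Finset.sum_filter_add_sum_filter_not _ (L ∈ ·),
    h.sum_filter_mem_intersectionPoints_insert hv hm, h.filter_notMem_intersectionPoints_insert hv,
    ← sum_erase_intersectionPoints_add A hv]
  obtain ⟨k, hk⟩ := Nat.exists_eq_succ_of_ne_zero hm.card_ne_zero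
  rw [hk] at hle ⊢
  have hsq : (k + 1) ^ 2 = k ^ 2 + 2 * k + 1 := by ring
  simp only [Nat.succ_eq_add_one, Nat.add_sub_cancel, hsq] at hle ⊢
  omega

end IsGenericLineThrough

end Tjurina

theorem generic_line_through_maximal_point_general {F : Type*} [Field F] [CharZero F]
    {A : Finset (MvPolynomial (Fin 3) F)} {v : Fin 3 → F} {L : MvPolynomial (Fin 3) F}
    (hv : v ≠ 0) (hm : (linesThrough A v).Nonempty) (h : IsGenericLineThrough A v L) :
    tjurina (insert L A) = tjurina A + A.card + (linesThrough A v).card - 1 ∧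
      mdr (insert L A) = min (mdr A + 1) (A.card - (linesThrough A v).card) :=
  ⟨h.tjurina_insert hv hm, h.mdr_insert hv hm⟩

/-- Let `A'` be an essential line arrangement of `d'` lines in `P^2`,
let `p` (represented by `v ≠ 0`) be an intersection point of `A'` of maximal
multiplicity `m' = m(A')`, and let `L` be a line not in `A'` which passes through `p`
and contains no intersection point of `A'` other than `p` (a generic line through
`p`). Set `A = A' ∪ {L}`, `r' = r(A')`. Then:
(1) `τ(A) = τ(A') + d' + m' − 1`;
(2) if `r' < d' − m'`, then `r(A) = r' + 1`;
(3) if `r' = d' − m'`, then `r(A) = r'`. -/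
theorem generic_line_through_maximal_point (A' : Finset (MvPolynomial (Fin 3) K))
    (hA' : IsArrangement A') (hA'ess : IsEssential A')
    (v : Fin 3 → K) (hv : v ≠ 0)
    (m' : ℕ) (hm' : m' = (A'.filter fun α => eval v α = 0).card)
    (hm2 : 2 ≤ m') (hmax : m' = maxMult A')
    (L : MvPolynomial (Fin 3) K) (hL : L ∉ A')
    (hA : IsArrangement (insert L A')) (hLv : eval v L = 0)
    (hgen : ∀ w : Fin 3 → K, w ≠ 0 → eval w L = 0 →
      2 ≤ (A'.filter fun α => eval w α = 0).card → ∃ c : K, w = c • v) :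
    tjurina (insert L A') = tjurina A' + A'.card + m' - 1 ∧
    (mdr A' < A'.card - m' → mdr (insert L A') = mdr A' + 1) ∧
    (mdr A' = A'.card - m' → mdr (insert L A') = mdr A') := by
  subst hm'
  have hne : (linesThrough A' v).Nonempty := Finset.card_pos.1 (pos_of_gt hm2)
  obtain ⟨hτ, hr⟩ := generic_line_through_maximal_point_general hv hne ⟨hL, hA, hLv, hgen⟩
  rw [linesThrough] at hτ hr
  exact ⟨hτ, by omega, by omega⟩
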